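/- Let n ∈ ℕ, let f : ℝⁿ → ℝ be smooth and let X : ℝⁿ → ℝⁿ be a smooth vector field. Then the map F(φ, x) := Σ_{a=1}^n X_a(x) ∂_{x_a} ( ∫_{ℝⁿ} f(y) φ(y − x) dy ) − ∫_{ℝⁿ} ( Σ_{a=1}^n X_a(y) ∂_a f(y) ) φ(y − x) dy, defined for φ ∈ 𝒜₀(ℝⁿ) and x ∈ ℝⁿ, is negligible; that is, for smooth functions the Lie derivative commutes with the embedding in the quotient algebra. -/

import Mathlib

open MeasureTheory Filter Topology

noncomputable section

namespace Colombeau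

/-- `φ ∈ 𝒟(ℝⁿ)`: smooth compactly supported function. -/
def IsTestFunction (n : ℕ) (φ : (Fin n → ℝ) → ℝ) : Prop :=
  ContDiff ℝ (⊤ : ℕ∞) φ ∧ HasCompactSupport φ

/-- `φ ∈ 𝒜₀(ℝⁿ)`: test function with integral one. -/
def IsA0 (n : ℕ) (φ : (Fin n → ℝ) → ℝ) : Prop :=
  IsTestFunction n φ ∧ ∫ x, φ x = 1

/-- `φ ∈ 𝒜_q(ℝⁿ)`: vanishing moments up to order `q`. -/
def IsAq (n q : ℕ) (φ : (Fin n → ℝ) → ℝ) : Prop :=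
  IsA0 n φ ∧ ∀ i : Fin n → ℕ, 1 ≤ ∑ j, i j → ∑ j, i j ≤ q →
    ∫ x, (∏ j, x j ^ i j) * φ x = 0

/-- the scaled mollifier `φ_ε(x) = ε⁻ⁿ φ(x/ε)`. -/
def scaled (n : ℕ) (φ : (Fin n → ℝ) → ℝ) (ε : ℝ) : (Fin n → ℝ) → ℝ :=
  fun x => (ε ^ n)⁻¹ * φ (ε⁻¹ • x)

/-- partial derivative `∂_i`. -/
def partialD {n : ℕ} (i : Fin n) (f : (Fin n → ℝ) → ℝ) : (Fin n → ℝ) → ℝ :=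
  fun x => fderiv ℝ f x (Pi.single i 1)

/-- multi-index derivative `∂^k = ∂₁^{k₁} ⋯ ∂_n^{k_n}`. -/
def multiD {n : ℕ} (k : Fin n → ℕ) (f : (Fin n → ℝ) → ℝ) : (Fin n → ℝ) → ℝ :=
  (List.finRange n).foldl (fun g i => (partialD i)^[k i] g) f

/-- Moderate functions of the basic space. -/
def Moderate (n : ℕ) (F : ((Fin n → ℝ) → ℝ) → (Fin n → ℝ) → ℝ) : Prop :=
  ∀ K : Set (Fin n → ℝ), IsCompact K → ∀ k : Fin n → ℕ,
    ∃ N : ℕ, ∀ φ, IsAq n N φ →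
      ∃ C > 0, ∀ᶠ ε in 𝓝[>] (0:ℝ), ∀ x ∈ K,
        |multiD k (F (scaled n φ ε)) x| ≤ C * ε ^ (-(N:ℤ))

/-- Negligible functions of the basic space. -/
def Negligible (n : ℕ) (F : ((Fin n → ℝ) → ℝ) → (Fin n → ℝ) → ℝ) : Prop :=
  ∀ K : Set (Fin n → ℝ), IsCompact K → ∀ k : Fin n → ℕ, ∀ m : ℕ,
    ∃ q : ℕ, ∀ φ, IsAq n q φ →
      ∃ C > 0, ∀ᶠ ε in 𝓝[>] (0:ℝ), ∀ x ∈ K,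
        |multiD k (F (scaled n φ ε)) x| ≤ C * ε ^ m

/-- Integrability of a continuous function against a continuous compactly supported weight. -/
theorem integrable_mul_of_hasCompactSupport {n : ℕ} {g w : (Fin n → ℝ) → ℝ} (hg : Continuous g)
    (hw : Continuous w) (hwc : HasCompactSupport w) : Integrable fun z => g z * w z :=
  (hg.mul hw).integrable_of_hasCompactSupport hwc.mul_left

/-- Differentiation under the integral sign against a continuous compactly supported weight. -/
theorem hasFDerivAt_integral_mul_weight {n : ℕ} {P : Type*} [NormedAddCommGroup P]
    [NormedSpace ℝ P] [ProperSpace P] {G : P × (Fin n → ℝ) → ℝ} (hG : ContDiff ℝ (⊤ : ℕ∞) G)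
    {w : (Fin n → ℝ) → ℝ} (hw : Continuous w) (hwc : HasCompactSupport w) (p : P) :
    HasFDerivAt (fun p => ∫ z, G (p, z) * w z)
      (∫ z, w z • (fderiv ℝ G (p, z)).comp (ContinuousLinearMap.inl ℝ P (Fin n → ℝ))) p := by
  have hG' : Continuous fun y =>
      (fderiv ℝ G y).comp (ContinuousLinearMap.inl ℝ P (Fin n → ℝ)) :=
    (hG.continuous_fderiv (by simp)).clm_comp continuous_const
  obtain ⟨C, hC⟩ := ((isCompact_closedBall p 1).prod hwc).exists_bound_of_continuousOn
    hG'.continuousOn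
  have hGp (q : P) : Continuous fun z => G (q, z) := hG.continuous.comp (by fun_prop)
  refine hasFDerivAt_integral_of_dominated_of_fderiv_le
    (F' := fun q z => w z • (fderiv ℝ G (q, z)).comp (ContinuousLinearMap.inl ℝ P (Fin n → ℝ)))
    (bound := fun z => C * ‖w z‖)
    (Metric.closedBall_mem_nhds p one_pos)
    (Eventually.of_forall fun q => ((hGp q).mul hw).aestronglyMeasurable)
    (integrable_mul_of_hasCompactSupport (hGp p) hw hwc) ?_ ?_ ?_ ?_
  · exact (hw.smul (hG'.comp (by fun_prop : Continuous fun z => (p, z)))).aestronglyMeasurable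
  · refine Eventually.of_forall fun z q hq => ?_
    rw [norm_smul, mul_comm]
    by_cases hz : z ∈ tsupport w
    · exact mul_le_mul_of_nonneg_right (hC (q, z) ⟨hq, hz⟩) (norm_nonneg _)
    · simp [image_eq_zero_of_notMem_tsupport hz]
  · exact (hw.integrable_of_hasCompactSupport hwc).norm.const_mul C
  · refine Eventually.of_forall fun z q _ => ?_
    have h1 : HasFDerivAt G (fderiv ℝ G (q, z)) (q, z) :=
      ((hG.differentiable (by simp)) (q, z)).hasFDerivAt
    exact (h1.comp q (hasFDerivAt_prodMk_left q z)).mul_const (w z)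

/-- The directional form of `hasFDerivAt_integral_mul_weight`. -/
theorem fderiv_integral_mul_weight_apply {n : ℕ} {P : Type*} [NormedAddCommGroup P]
    [NormedSpace ℝ P] [ProperSpace P] {G : P × (Fin n → ℝ) → ℝ} (hG : ContDiff ℝ (⊤ : ℕ∞) G)
    {w : (Fin n → ℝ) → ℝ} (hw : Continuous w) (hwc : HasCompactSupport w) (p v : P) :
    fderiv ℝ (fun p => ∫ z, G (p, z) * w z) p v = ∫ z, fderiv ℝ G (p, z) (v, 0) * w z := by
  rw [(hasFDerivAt_integral_mul_weight hG hw hwc p).fderiv, ContinuousLinearMap.integral_apply]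
  · simp [mul_comm]
  · refine Continuous.integrable_of_hasCompactSupport (hw.smul ?_) hwc.smul_right
    exact ((hG.continuous_fderiv (by simp)).comp
      (by fun_prop : Continuous fun z => (p, z))).clm_comp continuous_const

/-- A smooth function stays smooth after differentiating in a fixed direction. -/
theorem contDiff_fderiv_apply_const {V : Type*} [NormedAddCommGroup V] [NormedSpace ℝ V]
    {G : V → ℝ} (hG : ContDiff ℝ (⊤ : ℕ∞) G) (v : V) :
    ContDiff ℝ (⊤ : ℕ∞) fun p => fderiv ℝ G p v :=
  (hG.fderiv_right (m := (⊤ : ℕ∞)) (by simp)).clm_apply contDiff_const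

/-- The derivative of `t ↦ ∫ H (x, t z) w(z) dz`, expanded in coordinates. -/
theorem hasDerivAt_integral_dilated {n : ℕ} {H : (Fin n → ℝ) × (Fin n → ℝ) → ℝ}
    (hH : ContDiff ℝ (⊤ : ℕ∞) H) {w : (Fin n → ℝ) → ℝ} (hw : Continuous w)
    (hwc : HasCompactSupport w) (x : Fin n → ℝ) (t : ℝ) :
    HasDerivAt (fun t : ℝ => ∫ z, H (x, t • z) * w z)
      (∑ j, ∫ z, fderiv ℝ H (x, t • z) (0, Pi.single j 1) * (z j * w z)) t := by
  have hL : ContDiff ℝ (⊤ : ℕ∞) fun y : ℝ × (Fin n → ℝ) => (x, y.1 • y.2) := by fun_prop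
  have hG : ContDiff ℝ (⊤ : ℕ∞) fun y : ℝ × (Fin n → ℝ) => H (x, y.1 • y.2) := hH.comp hL
  have hd := (hasFDerivAt_integral_mul_weight hG hw hwc t).differentiableAt.hasDerivAt
  refine hd.congr_deriv ?_
  rw [← fderiv_apply_one_eq_deriv, fderiv_integral_mul_weight_apply hG hw hwc,
    ← integral_finsetSum]
  · congr 1
    ext z
    have h1 : HasFDerivAt H (fderiv ℝ H (x, t • z)) (x, t • z) :=
      (hH.differentiable (by simp) _).hasFDerivAt
    have h2 := (hasFDerivAt_const (𝕜 := ℝ) x (t, z)).prodMk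
      ((hasFDerivAt_fst (𝕜 := ℝ) (p := (t, z))).fun_smul (hasFDerivAt_snd (𝕜 := ℝ) (p := (t, z))))
    have h3 := (h1.comp (t, z) h2).fderiv
    simp only [Function.comp_def] at h3
    rw [h3]
    have hz : ((0 : Fin n → ℝ), z) = ∑ j, z j • ((0 : Fin n → ℝ), Pi.single j (1 : ℝ)) := by
      refine Prod.ext (by simp [Prod.fst_sum]) ?_
      simpa [Prod.snd_sum] using (pi_eq_sum_univ' z)
    have hv : fderiv ℝ H (x, t • z) (0, z)
        = ∑ j, z j * fderiv ℝ H (x, t • z) (0, Pi.single j 1) := by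
      conv_lhs => rw [hz]
      simp only [map_sum, map_smul, smul_eq_mul]
    simp [hv, Finset.sum_mul]
    exact Finset.sum_congr rfl fun j _ => by ring
  · intro j _
    refine integrable_mul_of_hasCompactSupport
      ((contDiff_fderiv_apply_const hH _).continuous.comp (by fun_prop)) (by fun_prop)
      hwc.mul_left

/-- If every coordinate term of the derivative of `t ↦ ∫ H (x, t z) w(z) dz` is `O(t^m)` and this
function vanishes at `0`, then it is `O(t^(m+1))`. -/
theorem exists_bound_integral_dilated_succ {n m : ℕ} {H : (Fin n → ℝ) × (Fin n → ℝ) → ℝ}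
    (hH : ContDiff ℝ (⊤ : ℕ∞) H) {K : Set (Fin n → ℝ)} {w : (Fin n → ℝ) → ℝ} (hw : Continuous w)
    (hwc : HasCompactSupport w) (h0 : ∀ x ∈ K, H (x, 0) * ∫ z, w z = 0)
    (hb : ∀ j, ∃ C, ∀ x ∈ K, ∀ t ∈ Set.Icc (0 : ℝ) 1,
      |∫ z, fderiv ℝ H (x, t • z) (0, Pi.single j 1) * (z j * w z)| ≤ C * t ^ m) :
    ∃ C, ∀ x ∈ K, ∀ t ∈ Set.Icc (0 : ℝ) 1, |∫ z, H (x, t • z) * w z| ≤ C * t ^ (m + 1) := by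
  choose C hC using hb
  refine ⟨∑ j, |C j|, fun x hx t ht => ?_⟩
  have hbound : ∀ s ∈ Set.Icc 0 t,
      ‖∑ j, ∫ z, fderiv ℝ H (x, s • z) (0, Pi.single j 1) * (z j * w z)‖
        ≤ (∑ j, |C j|) * t ^ m := by
    intro s hs
    rw [Finset.sum_mul]
    refine norm_sum_le_of_le _ fun j _ => (hC j x hx s ⟨hs.1, hs.2.trans ht.2⟩).trans ?_
    exact mul_le_mul (le_abs_self _) (pow_le_pow_left₀ hs.1 hs.2 m) (pow_nonneg hs.1 m)
      (abs_nonneg _)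
  have hmv := Convex.norm_image_sub_le_of_norm_hasDerivWithin_le
    (fun s _ => (hasDerivAt_integral_dilated hH hw hwc x s).hasDerivWithinAt) hbound
    (convex_Icc 0 t) ⟨le_rfl, ht.1⟩ ⟨ht.1, le_rfl⟩
  have hzero : ∫ z, H (x, (0 : ℝ) • z) * w z = 0 := by
    simpa only [zero_smul, integral_const_mul] using h0 x hx
  rw [hzero, sub_zero, sub_zero, Real.norm_eq_abs, Real.norm_eq_abs, abs_of_nonneg ht.1] at hmv
  rwa [pow_succ, ← mul_assoc]

/-- Multiplying the weight by a coordinate shifts its moments. -/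
theorem moment_mul_coord {n : ℕ} (w : (Fin n → ℝ) → ℝ) (i : Fin n → ℕ) (a : Fin n) :
    ∫ z, (∏ j, z j ^ i j) * (z a * w z)
      = ∫ z, (∏ j, z j ^ (i + Pi.single a 1 : Fin n → ℕ) j) * w z := by
  congr 1
  ext z
  have ha : ∏ j, z j ^ (Pi.single a 1 : Fin n → ℕ) j = z a := by
    rw [Finset.prod_eq_single a] <;> simp +contextual
  simp only [Pi.add_apply, pow_add, Finset.prod_mul_distrib, ha]
  ring

/-- The order of a multi-index raised by one in a single coordinate. -/
theorem sum_add_single {n : ℕ} (i : Fin n → ℕ) (a : Fin n) :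
    ∑ j, (i + Pi.single a 1 : Fin n → ℕ) j = (∑ j, i j) + 1 := by
  simp [Finset.sum_add_distrib]

/-- Moment condition implies decay: if all moments of `w` of order `< m` vanish, then
`∫ H (x, t z) w(z) dz = O(t^m)` uniformly for `x` in a compact set. -/
theorem exists_bound_integral_dilated {n : ℕ} {K : Set (Fin n → ℝ)} (hK : IsCompact K) (m : ℕ) :
    ∀ {H : (Fin n → ℝ) × (Fin n → ℝ) → ℝ}, ContDiff ℝ (⊤ : ℕ∞) H →
    ∀ {w : (Fin n → ℝ) → ℝ}, Continuous w → HasCompactSupport w →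
    (∀ i : Fin n → ℕ, ∑ j, i j < m → ∫ z, (∏ j, z j ^ i j) * w z = 0) →
    ∃ C, ∀ x ∈ K, ∀ t ∈ Set.Icc (0 : ℝ) 1, |∫ z, H (x, t • z) * w z| ≤ C * t ^ m := by
  induction m with
  | zero =>
    intro H hH w hw hwc _
    have hc : Continuous fun y : ((Fin n → ℝ) × ℝ) × (Fin n → ℝ) => H (y.1.1, y.1.2 • y.2) :=
      hH.continuous.comp (by fun_prop)
    obtain ⟨C, hC⟩ := ((hK.prod (isCompact_Icc (a := (0 : ℝ)) (b := 1))).prod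
      hwc).exists_bound_of_continuousOn hc.continuousOn
    refine ⟨∫ z, C * ‖w z‖, fun x hx t ht => ?_⟩
    rw [pow_zero, mul_one, ← Real.norm_eq_abs]
    refine norm_integral_le_of_norm_le ((hw.integrable_of_hasCompactSupport hwc).norm.const_mul C)
      (Eventually.of_forall fun z => ?_)
    rw [norm_mul]
    by_cases hz : z ∈ tsupport w
    · exact mul_le_mul_of_nonneg_right (hC ((x, t), z) ⟨⟨hx, ht⟩, hz⟩) (norm_nonneg _)
    · simp [image_eq_zero_of_notMem_tsupport hz]
  | succ m ih =>
    intro H hH w hw hwc hmom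
    have hint : ∫ z, w z = 0 := by simpa using hmom 0 (by simp)
    refine exists_bound_integral_dilated_succ hH hw hwc (fun x _ => by rw [hint, mul_zero])
      fun a => ih (contDiff_fderiv_apply_const hH _) (by fun_prop) hwc.mul_left fun i hi => ?_
    rw [moment_mul_coord]
    exact hmom _ (by rw [sum_add_single]; omega)

/-- A functional `F` on test functions given by a smooth kernel `G` vanishing at `z = 0`:
`F(ψ, x) = ∫ G (x, z) ψ(z) dz` with `G (x, 0) = 0`. -/
def HasKernelVanishingAtZero (n : ℕ) (F : ((Fin n → ℝ) → ℝ) → (Fin n → ℝ) → ℝ) : Prop :=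
  ∃ G : (Fin n → ℝ) × (Fin n → ℝ) → ℝ, ContDiff ℝ (⊤ : ℕ∞) G ∧ (∀ x, G (x, 0) = 0) ∧
    ∀ ψ, IsTestFunction n ψ → F ψ = fun x => ∫ z, G (x, z) * ψ z

namespace HasKernelVanishingAtZero

variable {n : ℕ} {F : ((Fin n → ℝ) → ℝ) → (Fin n → ℝ) → ℝ}

theorem partialD (hF : HasKernelVanishingAtZero n F) (a : Fin n) :
    HasKernelVanishingAtZero n fun ψ => Colombeau.partialD a (F ψ) := by
  obtain ⟨G, hG, hG0, hFG⟩ := hF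
  refine ⟨fun y => fderiv ℝ G y (Pi.single a 1, 0), contDiff_fderiv_apply_const hG _,
    fun x => ?_, fun ψ hψ => ?_⟩
  · have h1 : HasFDerivAt (fun x => G (x, 0)) _ x :=
      (hG.differentiable (by simp) (x, 0)).hasFDerivAt.comp x (hasFDerivAt_prodMk_left x 0)
    have h2 := h1.unique (by simpa only [hG0] using hasFDerivAt_const (0 : ℝ) x)
    simpa using congrArg (fun L => L (Pi.single a 1)) h2
  · ext x
    simp only [hFG ψ hψ]
    exact fderiv_integral_mul_weight_apply hG hψ.1.continuous hψ.2 x _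

theorem iterate_partialD (hF : HasKernelVanishingAtZero n F) (a : Fin n) (k : ℕ) :
    HasKernelVanishingAtZero n fun ψ => (Colombeau.partialD a)^[k] (F ψ) := by
  induction k with
  | zero => exact hF
  | succ k ih => simpa only [Function.iterate_succ_apply'] using ih.partialD a

theorem multiD (hF : HasKernelVanishingAtZero n F) (k : Fin n → ℕ) :
    HasKernelVanishingAtZero n fun ψ => Colombeau.multiD k (F ψ) := by
  unfold Colombeau.multiD
  generalize List.finRange n = l
  induction l generalizing F with
  | nil => exact hF
  | cons a l ih => exact ih (hF.iterate_partialD a (k a))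

end HasKernelVanishingAtZero

theorem IsTestFunction.scaled {n : ℕ} {φ : (Fin n → ℝ) → ℝ} (hφ : IsTestFunction n φ) {ε : ℝ}
    (hε : ε ≠ 0) : IsTestFunction n (scaled n φ ε) :=
  ⟨contDiff_const.mul (hφ.1.comp (contDiff_const_smul _)),
    (hφ.2.comp_smul (inv_ne_zero hε)).mul_left⟩

/-- Change of variables for integration against a scaled mollifier. -/
theorem integral_mul_scaled {n : ℕ} (g φ : (Fin n → ℝ) → ℝ) {ε : ℝ} (hε : 0 < ε) :
    ∫ z, g z * scaled n φ ε z = ∫ z, g (ε • z) * φ z := by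
  have h := Measure.integral_comp_inv_smul_of_nonneg volume (fun z => g (ε • z) * φ z) hε.le
  simp only [smul_inv_smul₀ hε.ne', Module.finrank_fin_fun, smul_eq_mul] at h
  calc ∫ z, g z * scaled n φ ε z = ∫ z, (ε ^ n)⁻¹ * (g z * φ (ε⁻¹ • z)) := by
        congr 1; ext z; simp only [scaled]; ring
    _ = _ := by rw [integral_const_mul, h, inv_mul_cancel_left₀ (pow_pos hε n).ne']

/-- Functionals with a smooth kernel vanishing at `z = 0` are negligible. -/
theorem HasKernelVanishingAtZero.negligible {n : ℕ} {F : ((Fin n → ℝ) → ℝ) → (Fin n → ℝ) → ℝ}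
    (hF : HasKernelVanishingAtZero n F) : Negligible n F := by
  intro K hK k m
  obtain ⟨G, hG, hG0, hFG⟩ := hF.multiD k
  beta_reduce at hFG
  refine ⟨m, fun φ hφ => ?_⟩
  have hφt := hφ.1.1
  obtain ⟨C, hC⟩ := exists_bound_integral_dilated_succ (m := m) (K := K) hG hφt.1.continuous hφt.2
    (fun x _ => by rw [hG0, zero_mul]) fun a =>
      exists_bound_integral_dilated hK m (contDiff_fderiv_apply_const hG _)
        (by have := hφt.1.continuous; fun_prop) hφt.2.mul_left fun i hi => by
          rw [moment_mul_coord]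
          exact hφ.2 _ (by rw [sum_add_single]; omega) (by rw [sum_add_single]; omega)
  refine ⟨|C| + 1, by positivity, ?_⟩
  filter_upwards [Ioc_mem_nhdsGT (zero_lt_one' ℝ)] with ε hε x hx
  rw [congrFun (hFG _ (hφt.scaled hε.1.ne')) x, integral_mul_scaled (fun z => G (x, z)) φ hε.1]
  refine (hC x hx ε ⟨hε.1.le, hε.2⟩).trans ?_
  exact mul_le_mul ((le_abs_self C).trans (by linarith))
    (pow_le_pow_of_le_one hε.1.le hε.2 m.le_succ) (pow_nonneg hε.1.le _) (by positivity)

/-- The embedding of a function, written with the kernel `(x, z) ↦ f (x + z)`. -/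
theorem integral_mul_translate {n : ℕ} (f ψ : (Fin n → ℝ) → ℝ) (x : Fin n → ℝ) :
    ∫ y, f y * ψ (y - x) = ∫ z, f (x + z) * ψ z := by
  rw [← integral_add_left_eq_self (fun y => f y * ψ (y - x)) x]
  simp only [add_sub_cancel_left]

/-- Partial derivatives commute with the embedding of smooth functions. -/
theorem partialD_integral_mul_translate {n : ℕ} {f : (Fin n → ℝ) → ℝ}
    (hf : ContDiff ℝ (⊤ : ℕ∞) f) {ψ : (Fin n → ℝ) → ℝ} (hψ : IsTestFunction n ψ) (a : Fin n)
    (x : Fin n → ℝ) :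
    partialD a (fun x => ∫ y, f y * ψ (y - x)) x = ∫ z, partialD a f (x + z) * ψ z := by
  have hG : ContDiff ℝ (⊤ : ℕ∞) fun y : (Fin n → ℝ) × (Fin n → ℝ) => f (y.1 + y.2) :=
    hf.comp (contDiff_fst.add contDiff_snd)
  simp only [integral_mul_translate]
  refine (fderiv_integral_mul_weight_apply hG hψ.1.continuous hψ.2 x _).trans ?_
  congr 1
  ext z
  have h1 : HasFDerivAt (fun y : (Fin n → ℝ) × (Fin n → ℝ) => f (y.1 + y.2)) _ (x, z) :=
    (hf.differentiable (by simp) (x + z)).hasFDerivAt.comp (x, z)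
      (hasFDerivAt_fst.add hasFDerivAt_snd)
  rw [h1.fderiv]
  simp [partialD]

/-- for a smooth function `f` the Lie derivative along a smooth vector
field commutes with the embedding, in the sense that the difference is negligible. -/
theorem lie_derivative_commutes_for_smooth (n : ℕ) (f : (Fin n → ℝ) → ℝ)
    (hf : ContDiff ℝ (⊤ : ℕ∞) f) (X : (Fin n → ℝ) → (Fin n → ℝ)) (hX : ContDiff ℝ (⊤ : ℕ∞) X) :
    Negligible n (fun φ x =>
      (∑ a, X x a * partialD a (fun z => ∫ y, f y * φ (y - z)) x) -
        ∫ y, (∑ a, X y a * partialD a f y) * φ (y - x)) := by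
  have hXa (a : Fin n) : ContDiff ℝ (⊤ : ℕ∞) fun x => X x a := contDiff_pi.1 hX a
  have hfa (a : Fin n) : ContDiff ℝ (⊤ : ℕ∞) (partialD a f) := contDiff_fderiv_apply_const hf _
  have hadd : ContDiff ℝ (⊤ : ℕ∞) fun y : (Fin n → ℝ) × (Fin n → ℝ) => y.1 + y.2 :=
    contDiff_fst.add contDiff_snd
  refine HasKernelVanishingAtZero.negligible
    ⟨fun y => (∑ a, X y.1 a * partialD a f (y.1 + y.2))
        - ∑ a, X (y.1 + y.2) a * partialD a f (y.1 + y.2), ?_, fun x => by simp, fun ψ hψ => ?_⟩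
  · exact (ContDiff.sum fun a _ => ((hXa a).comp contDiff_fst).mul ((hfa a).comp hadd)).sub
      (ContDiff.sum fun a _ => ((hXa a).comp hadd).mul ((hfa a).comp hadd))
  · ext x
    have hint {g : (Fin n → ℝ) → ℝ} (hg : Continuous g) : Integrable fun z => g z * ψ z :=
      integrable_mul_of_hasCompactSupport hg hψ.1.continuous hψ.2
    have hXc (a : Fin n) : Continuous fun x => X x a := (hXa a).continuous
    have hfc (a : Fin n) : Continuous (partialD a f) := (hfa a).continuous
    simp only [partialD_integral_mul_translate hf hψ, sub_mul]
    rw [integral_mul_translate (fun y => ∑ a, X y a * partialD a f y), integral_sub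
      (hint (g := fun z => ∑ a, X x a * partialD a f (x + z)) (by fun_prop))
      (hint (g := fun z => ∑ a, X (x + z) a * partialD a f (x + z)) (by fun_prop))]
    congr 1
    simp only [Finset.sum_mul, mul_assoc]
    rw [integral_finsetSum _ fun a _ => (hint (by fun_prop)).const_mul _]
    simp only [integral_const_mul]

end Colombeau
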